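/- arXiv:2006.12413 — 6 statements merged into one kernel-verified Lean document; each statement's English description precedes it below -/
import Mathlib

section
/- Fix positive integers M, N, a real T > 0, set Δf = 1/T, and let g be the rectangular pulse g(t) = 1/√T for 0 ≤ t < T and g(t) = 0 otherwise. Then the Zak transform of the OTFS transmit signal x(t) satisfies, for all τ, ν ∈ ℝ, Z_x(τ, ν) = Σ_{k=0}^{N−1} Σ_{l=0}^{M−1} x[k,l]·Φ_{k,l}(τ, ν), where Φ_{k,l}(τ, ν) := (Z_g(τ, ν)/(MN)) · Σ_{m=0}^{M−1} Σ_{n=0}^{N−1} e^{−2πi n T (ν − kΔf/N)}·e^{2πi m Δf (τ − lT/M)} and Z_g(τ, ν) = e^{2πi ν T ⌊τ/T⌋}. -/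
open Complex Real Finset

/-- The Zak transform of `f : ℝ → ℂ` with period `T`:
`Z_f(τ, ν) := √T · Σ_{k ∈ ℤ} f(τ + kT)·e^{−2πi k ν T}`. -/
noncomputable def zak (T : ℝ) (f : ℝ → ℂ) (τ ν : ℝ) : ℂ :=
  (Real.sqrt T : ℂ) * ∑' k : ℤ, f (τ + k * T) * Complex.exp (-2 * π * I * k * ν * T)

/-- The Zak transform of the OTFS transmit signal (with the rectangular pulse) is
`Z_x(τ,ν) = Σ_{k,l} x[k,l] Φ_{k,l}(τ,ν)` with
`Φ_{k,l}(τ,ν) = (Z_g(τ,ν)/(MN)) Σ_{m,n} e^{−2πinT(ν−kΔf/N)} e^{2πimΔf(τ−lT/M)}`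
and `Z_g(τ,ν) = e^{2πiνT⌊τ/T⌋}`. -/
theorem zak_of_otfs_signal (M N : ℕ) (hM : 0 < M) (hN : 0 < N)
    (T : ℝ) (hT : 0 < T) (Δf : ℝ) (hΔf : Δf = 1 / T)
    (g : ℝ → ℂ) (hg : ∀ t : ℝ, g t = if 0 ≤ t ∧ t < T then (1 / Real.sqrt T : ℂ) else 0)
    (x : ℕ → ℕ → ℂ)
    (X : ℕ → ℕ → ℂ)
    (hX : ∀ n m : ℕ, X n m = (1 / (M * N) : ℂ) * ∑ k ∈ range N, ∑ l ∈ range M,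
      x k l * Complex.exp (-2 * π * I * ((m * l : ℝ) / M - (n * k : ℝ) / N)))
    (xsig : ℝ → ℂ)
    (hx : ∀ t : ℝ, xsig t = ∑ m ∈ range M, ∑ n ∈ range N,
      X n m * g (t - n * T) * Complex.exp (2 * π * I * ((m : ℝ) * Δf * (t - n * T)))) :
    ∀ τ ν : ℝ,
      zak T xsig τ ν = ∑ k ∈ range N, ∑ l ∈ range M, x k l *
        (Complex.exp (2 * π * I * ν * T * (⌊τ / T⌋ : ℤ)) / (M * N) *
          ∑ m ∈ range M, ∑ n ∈ range N,
            Complex.exp (-2 * π * I * ((n : ℝ) * T * (ν - k * Δf / N))) *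
              Complex.exp (2 * π * I * ((m : ℝ) * Δf * (τ - l * T / M)))) := by
  intro τ ν
  have hs : (Real.sqrt T : ℂ) ≠ 0 := by
    exact_mod_cast (Real.sqrt_pos.mpr hT).ne'
  have hTc : (T : ℂ) ≠ 0 := by exact_mod_cast hT.ne'
  have hMc : (M : ℂ) ≠ 0 := by exact_mod_cast hM.ne'
  have hNc : (N : ℂ) ≠ 0 := by exact_mod_cast hN.ne'
  set q : ℤ := ⌊τ / T⌋ with hq
  have hgq : ∀ (k : ℤ) (n : ℕ), g (τ + k * T - n * T) =
      if k = n - q then (1 / Real.sqrt T : ℂ) else 0 := by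
    intro k n
    rw [hg]
    congr 1
    have h1 : (q = n - k) ↔ (((n - k : ℤ) : ℝ) ≤ τ / T ∧ τ / T < ((n - k : ℤ) : ℝ) + 1) :=
      Int.floor_eq_iff
    rw [le_div_iff₀ hT, div_lt_iff₀ hT] at h1
    push_cast at h1
    have h2 : (k = n - q) ↔ (q = n - k) := by omega
    rw [eq_iff_iff, h2, h1]
    constructor
    · rintro ⟨a, b⟩
      constructor <;> nlinarith
    · rintro ⟨a, b⟩
      constructor <;> nlinarith
  have key : ∀ m n : ℕ, HasSum (fun k : ℤ => X n m * g (τ + k * T - n * T) *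
      Complex.exp (2 * π * I * ((m : ℝ) * Δf * (((τ + k * T : ℝ) : ℂ) - n * T))) *
        Complex.exp (-2 * π * I * k * ν * T))
      (X n m * (1 / Real.sqrt T : ℂ) * (Complex.exp (2 * π * I * ν * T * q) *
        Complex.exp (-2 * π * I * (n * T * ν)) * Complex.exp (2 * π * I * (m * Δf * τ)))) := by
    intro m n
    convert hasSum_single ((n : ℤ) - q) ?_ using 1
    · rw [hgq, if_pos rfl]
      simp only [mul_assoc]
      congr 2
      simp only [← mul_assoc]
      rw [← Complex.exp_add, ← Complex.exp_add, ← Complex.exp_add, Complex.exp_eq_exp_iff_exists_int]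
      refine ⟨m * q, ?_⟩
      rw [hΔf]
      push_cast
      field_simp
      ring
    · intro k hk
      rw [hgq, if_neg hk]
      simp
  have tot := hasSum_sum (s := range M) (fun m _ => hasSum_sum (s := range N) (fun n _ => key m n))
  have hz : zak T xsig τ ν = (Real.sqrt T : ℂ) * ∑ m ∈ range M, ∑ n ∈ range N,
      (X n m * (1 / Real.sqrt T : ℂ) * (Complex.exp (2 * π * I * ν * T * q) *
        Complex.exp (-2 * π * I * (n * T * ν)) * Complex.exp (2 * π * I * (m * Δf * τ)))) := by
    rw [zak, ← tot.tsum_eq]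
    congr 2
    funext k
    rw [hx]
    simp only [Finset.sum_mul]
  rw [hz]
  have e : ∀ k l m n : ℕ,
      Complex.exp (-2 * π * I * ((n : ℝ) * T * (ν - k * Δf / N))) *
        Complex.exp (2 * π * I * ((m : ℝ) * Δf * (τ - l * T / M))) =
      Complex.exp (-2 * π * I * ((m * l : ℝ) / M - (n * k : ℝ) / N)) *
       (Complex.exp (-2 * π * I * (n * T * ν)) * Complex.exp (2 * π * I * (m * Δf * τ))) := by
    intro k l m n
    rw [← Complex.exp_add, ← Complex.exp_add, ← Complex.exp_add, hΔf]
    congr 1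
    push_cast
    field_simp
    ring
  simp only [e, hX, Finset.mul_sum, Finset.sum_mul]
  have c : ∀ F : ℕ → ℕ → ℕ → ℕ → ℂ,
      ∑ m ∈ range M, ∑ n ∈ range N, ∑ k ∈ range N, ∑ l ∈ range M, F m n k l =
      ∑ k ∈ range N, ∑ l ∈ range M, ∑ m ∈ range M, ∑ n ∈ range N, F m n k l := by
    intro F
    have h1 : ∀ m, ∑ n ∈ range N, ∑ k ∈ range N, ∑ l ∈ range M, F m n k l =
        ∑ k ∈ range N, ∑ l ∈ range M, ∑ n ∈ range N, F m n k l := by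
      intro m
      rw [Finset.sum_comm]
      exact Finset.sum_congr rfl fun k _ => Finset.sum_comm
    simp only [h1]
    rw [Finset.sum_comm]
    exact Finset.sum_congr rfl fun k _ => Finset.sum_comm
  rw [c]
  refine Finset.sum_congr rfl fun k _ => Finset.sum_congr rfl fun l _ =>
    Finset.sum_congr rfl fun m _ => Finset.sum_congr rfl fun n _ => ?_
  field_simp
end

section
/- Fix positive integers M, N, a real T > 0, set Δf = 1/T, and let g be the rectangular pulse g(t) = 1/√T for 0 ≤ t < T and 0 otherwise; let x(t) be the OTFS transmit signal with delay-Doppler symbols x[k,l]. Let L ≥ 1 be an integer and suppose the noise-free received signal is y(t) = Σ_{i=1}^{L} h_i·x(t − τ_i)·e^{2πi ν_i (t − τ_i)} with h_i ∈ ℂ, 0 < τ_i < T, ν_i ∈ ℝ. Then for all 0 ≤ k' ≤ N−1, 0 ≤ l' ≤ M−1 the sampled Zak transform of y satisfies Z_y(l'T/M, k'Δf/N) = Σ_{k=0}^{N−1} Σ_{l=0}^{M−1} x[k,l]·h̃[k',l',k,l], where h̃[k',l',k,l] := Σ_{i=1}^{L} h_i[k',l']·w₁((k'−k)Δf/N −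 ν_i)·w₂((l'−l)T/M − τ_i), h_i[k',l'] := h_i·e^{2πi (ν_i/Δf)(l'/M − τ_i/T)}·e^{2πi (k'/N − ν_i/Δf)·⌊l'/M − τ_i/T⌋}, w₁(ν) := (1/N) Σ_{n=0}^{N−1} e^{−2πi n ν T}, and w₂(τ) := (1/M) Σ_{m=0}^{M−1} e^{2πi m Δf τ}. -/
open Complex Real Finset

/-- The basic Doppler-domain pulse `w₁(ν) := (1/N) Σ_{n=0}^{N−1} e^{−2πi n ν T}`. -/
noncomputable def w1 (N : ℕ) (T : ℝ) (ν : ℝ) : ℂ :=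
  (1 / N : ℂ) * ∑ n ∈ range N, Complex.exp (-2 * π * I * n * ν * T)

/-- The basic delay-domain pulse `w₂(τ) := (1/M) Σ_{m=0}^{M−1} e^{2πi m Δf τ}` with
`Δf = 1/T`. -/
noncomputable def w2 (M : ℕ) (T : ℝ) (τ : ℝ) : ℂ :=
  (1 / M : ℂ) * ∑ m ∈ range M, Complex.exp (2 * π * I * m * (1 / T) * τ)

/-- The sampled Zak transform of the noise-free multipath received OTFS signal:
`Z_y(l'T/M, k'Δf/N) = Σ_{k,l} x[k,l]·h̃[k',l',k,l]`. -/
theorem zak_receiver_io_relation (M N : ℕ) (hM : 0 < M) (hN : 0 < N)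
    (T : ℝ) (hT : 0 < T) (Δf : ℝ) (hΔf : Δf = 1 / T)
    (g : ℝ → ℂ) (hg : ∀ t : ℝ, g t = if 0 ≤ t ∧ t < T then (1 / Real.sqrt T : ℂ) else 0)
    (x : ℕ → ℕ → ℂ)
    (X : ℕ → ℕ → ℂ)
    (hX : ∀ n m : ℕ, X n m = (1 / (M * N) : ℂ) * ∑ k ∈ range N, ∑ l ∈ range M,
      x k l * Complex.exp (-2 * π * I * ((m * l : ℝ) / M - (n * k : ℝ) / N)))
    (xsig : ℝ → ℂ)
    (hx : ∀ t : ℝ, xsig t = ∑ m ∈ range M, ∑ n ∈ range N,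
      X n m * g (t - n * T) * Complex.exp (2 * π * I * ((m : ℝ) * Δf * (t - n * T))))
    (L : ℕ) (hL : 1 ≤ L) (h : ℕ → ℂ) (τd νd : ℕ → ℝ)
    (hτ : ∀ i < L, 0 < τd i ∧ τd i < T)
    (y : ℝ → ℂ)
    (hy : ∀ t : ℝ, y t = ∑ i ∈ range L,
      h i * xsig (t - τd i) * Complex.exp (2 * π * I * (νd i * (t - τd i)))) :
    ∀ k' < N, ∀ l' < M,
      zak T y ((l' : ℝ) * T / M) ((k' : ℝ) * Δf / N) =
        ∑ k ∈ range N, ∑ l ∈ range M, x k l *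
          ∑ i ∈ range L,
            (h i * Complex.exp (2 * π * I * ((νd i / Δf) * ((l' : ℝ) / M - τd i / T))) *
              Complex.exp (2 * π * I * (((k' : ℝ) / N - νd i / Δf) *
                (⌊(l' : ℝ) / M - τd i / T⌋ : ℤ)))) *
            w1 N T (((k' : ℝ) - (k : ℝ)) * Δf / N - νd i) *
            w2 M T (((l' : ℝ) - (l : ℝ)) * T / M - τd i) := by
  intro k' hk' l' hl'
  have hT0 : (T : ℂ) ≠ 0 := by exact_mod_cast hT.ne'
  have hM0 : (M : ℂ) ≠ 0 := by exact_mod_cast hM.ne'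
  have hN0 : (N : ℂ) ≠ 0 := by exact_mod_cast hN.ne'
  have hs0 : (Real.sqrt T : ℂ) ≠ 0 := by
    exact_mod_cast (Real.sqrt_pos.mpr hT).ne'
  subst hΔf
  -- the common summand
  let C : ℕ → ℕ → ℕ → ℕ → ℕ → ℂ := fun i m n k l =>
    h i * x k l * (1 / (M * N) : ℂ) * Complex.exp (2 * π * I *
      (νd i * T * ((l' / M - τd i / T) + n - (⌊(l' : ℝ) / M - τd i / T⌋ : ℤ))
        - (n - (⌊(l' : ℝ) / M - τd i / T⌋ : ℤ)) * k' / N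
        + m * (l' / M - τd i / T) - m * l / M + n * k / N))
  have key : ∀ i m n : ℕ, HasSum (fun p : ℤ =>
      h i * (X n m * g ((l' : ℝ) * T / M + p * T - τd i - n * T) *
        Complex.exp (2 * π * I * ((m : ℝ) * (1 / T : ℝ) *
          (((l' : ℝ) * T / M + p * T - τd i : ℝ) - n * T)))) *
        Complex.exp (2 * π * I * (νd i * (((l' : ℝ) * T / M + p * T : ℝ) - τd i))) *
        Complex.exp (-2 * π * I * p * ((k' : ℝ) * (1 / T) / N : ℝ) * T))
      ((1 / Real.sqrt T : ℂ) * ∑ k ∈ range N, ∑ l ∈ range M, C i m n k l) := by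
    intro i m n
    set f : ℤ := ⌊(l' : ℝ) / M - τd i / T⌋ with hf
    have harg : ∀ p : ℤ, (l' : ℝ) * T / M + p * T - τd i - n * T
        = (((l' : ℝ) / M - τd i / T) + p - n) * T := by
      intro p; field_simp; ring
    convert hasSum_single ((n : ℤ) - f) ?_ using 1
    · rw [harg, hg, if_pos, hX]
      · simp only [Finset.mul_sum, Finset.sum_mul]
        refine Finset.sum_congr rfl fun k _ => Finset.sum_congr rfl fun l _ => ?_
        simp only [C]
        rw [← hf]
        have hexp : Complex.exp (2 * π * I *
            (νd i * T * ((l' / M - τd i / T) + n - f)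
              - (n - f) * k' / N + m * (l' / M - τd i / T) - m * l / M + n * k / N))
          = Complex.exp (-2 * π * I * ((m * l : ℝ) / M - (n * k : ℝ) / N)) *
            Complex.exp (2 * π * I * ((m : ℝ) * (1 / T : ℝ) *
              (((l' : ℝ) * T / M + ((n : ℤ) - f : ℤ) * T - τd i : ℝ) - n * T))) *
            Complex.exp (2 * π * I *
              (νd i * (((l' : ℝ) * T / M + ((n : ℤ) - f : ℤ) * T : ℝ) - τd i))) *
            Complex.exp (-2 * π * I * ((n : ℤ) - f : ℤ) *
              ((k' : ℝ) * (1 / T) / N : ℝ) * T) := by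
          rw [← Complex.exp_add, ← Complex.exp_add, ← Complex.exp_add,
            Complex.exp_eq_exp_iff_exists_int]
          refine ⟨m * f, ?_⟩
          push_cast
          field_simp
          ring
        rw [hexp]
        ring
      · have h1 := Int.floor_le ((l' : ℝ) / M - τd i / T)
        have h2 := Int.lt_floor_add_one ((l' : ℝ) / M - τd i / T)
        rw [← hf] at h1 h2
        push_cast
        constructor
        · apply mul_nonneg _ hT.le
          linarith
        · have : ((l' : ℝ) / M - τd i / T + (n - f) - n) < 1 := by linarith
          nlinarith
    · intro p hp
      rw [harg, hg, if_neg]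
      · simp
      · rintro ⟨h1, h2⟩
        apply hp
        have h3 : 0 ≤ ((l' : ℝ) / M - τd i / T) + p - n := nonneg_of_mul_nonneg_left h1 hT
        have h4 : ((l' : ℝ) / M - τd i / T) + p - n < 1 := by
          by_contra hc
          push Not at hc
          nlinarith
        have : f = (n : ℤ) - p := by
          rw [hf, Int.floor_eq_iff]
          push_cast
          constructor <;> linarith
        omega
  have key2 := hasSum_sum (s := range L) (fun i _ => hasSum_sum (s := range M) (fun m _ =>
    hasSum_sum (s := range N) (fun n _ => key i m n)))
  have hz : zak T y ((l' : ℝ) * T / M) ((k' : ℝ) * (1 / T) / N) =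
      ∑ i ∈ range L, ∑ m ∈ range M, ∑ n ∈ range N, ∑ k ∈ range N, ∑ l ∈ range M,
        C i m n k l := by
    unfold zak
    have key3 := key2.tsum_eq
    simp only [← Finset.mul_sum] at key3
    have hC : (∑ i ∈ range L, ∑ m ∈ range M, ∑ n ∈ range N, ∑ k ∈ range N, ∑ l ∈ range M,
        C i m n k l) = (Real.sqrt T : ℂ) * ((1 / Real.sqrt T : ℂ) *
        ∑ i ∈ range L, ∑ m ∈ range M, ∑ n ∈ range N, ∑ k ∈ range N, ∑ l ∈ range M,
        C i m n k l) := by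
      rw [← mul_assoc, mul_one_div_cancel hs0, one_mul]
    rw [hC, ← key3]
    congr 1
    refine tsum_congr fun p => ?_
    simp only [hy, hx, Finset.mul_sum, Finset.sum_mul]
  rw [hz]
  have hr : ∀ k l i : ℕ, x k l * ((h i * Complex.exp (2 * π * I * ((νd i / (1 / T : ℝ)) *
        ((l' : ℝ) / M - τd i / T))) *
      Complex.exp (2 * π * I * (((k' : ℝ) / N - νd i / (1 / T : ℝ)) *
        (⌊(l' : ℝ) / M - τd i / T⌋ : ℤ)))) *
      w1 N T (((k' : ℝ) - (k : ℝ)) * (1 / T) / N - νd i) *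
      w2 M T (((l' : ℝ) - (l : ℝ)) * T / M - τd i)) =
      ∑ m ∈ range M, ∑ n ∈ range N, C i m n k l := by
    intro k l i
    unfold w1 w2
    simp only [Finset.mul_sum, Finset.sum_mul]
    refine Finset.sum_congr rfl fun m _ => Finset.sum_congr rfl fun n _ => ?_
    simp only [C]
    generalize ⌊(l' : ℝ) / M - τd i / T⌋ = f
    have hexp : Complex.exp (2 * π * I *
            (νd i * T * ((l' / M - τd i / T) + n - f)
              - (n - f) * k' / N + m * (l' / M - τd i / T) - m * l / M + n * k / N))
        = Complex.exp (2 * π * I * ((νd i / (1 / T : ℝ)) * ((l' : ℝ) / M - τd i / T))) *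
          Complex.exp (2 * π * I * (((k' : ℝ) / N - νd i / (1 / T : ℝ)) * f)) *
          Complex.exp (-2 * π * I * n *
            (((k' : ℝ) - (k : ℝ)) * (1 / T) / N - νd i : ℝ) * T) *
          Complex.exp (2 * π * I * m * (1 / T) *
            (((l' : ℝ) - (l : ℝ)) * T / M - τd i : ℝ)) := by
      rw [← Complex.exp_add, ← Complex.exp_add, ← Complex.exp_add]
      congr 1
      push_cast
      field_simp
      ring
    rw [hexp]
    field_simp
  have hr2 : ∀ k l : ℕ, _ = _ := fun k l =>
    (Finset.mul_sum (range L) _ (x k l)).trans (Finset.sum_congr rfl fun i _ => hr k l i)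
  refine Eq.trans ?_ (Finset.sum_congr rfl fun k _ => Finset.sum_congr rfl fun l _ =>
    (hr2 k l).symm)
  calc _ = ∑ i ∈ range L, ∑ m ∈ range M, ∑ k ∈ range N, ∑ l ∈ range M, ∑ n ∈ range N,
        C i m n k l := by
        refine Finset.sum_congr rfl fun i _ => Finset.sum_congr rfl fun m _ => ?_
        rw [Finset.sum_comm]
        exact Finset.sum_congr rfl fun k _ => Finset.sum_comm
    _ = ∑ i ∈ range L, ∑ k ∈ range N, ∑ l ∈ range M, ∑ m ∈ range M, ∑ n ∈ range N,
        C i m n k l := by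
        refine Finset.sum_congr rfl fun i _ => ?_
        rw [Finset.sum_comm]
        exact Finset.sum_congr rfl fun k _ => Finset.sum_comm
    _ = _ := by
        rw [Finset.sum_comm]
        exact Finset.sum_congr rfl fun k _ => Finset.sum_comm
end

section
/- Fix positive integers M, N, a real T > 0, set Δf = 1/T, and let q be an integer with 0 ≤ q ≤ M−1. Consider a single-path channel (L = 1) with gain h₁ ∈ ℂ, zero delay τ₁ = 0 and Doppler shift ν₁ = qΔf. Then the effective delay-Doppler channel of the Zak receiver, h̃[k',l',k,l] := h₁·e^{2πi (ν₁/Δf)(l'/M)}·e^{2πi (k'/N − ν₁/Δf)·⌊l'/M⌋}·w₁((k'−k)Δf/N − ν₁)·w₂((l'−l)T/M), satisfies h̃[k',l',k,l] = h₁·e^{2πi q l'/M}·δ[k − k']·δ[l − l'] for all 0 ≤ k, k' ≤ N−1 and 0 ≤ l, l' ≤ M−1, where δ[0] = 1 and δ[m] = 0 for m ≠ 0. That is, the Zak-receiver delay-Doppler channel matrix is diagonal with unit-modulus-times-h₁ entries. -/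
open Complex Real Finset

/-- Orthogonality of the characters of the cyclic group of order `N`. -/
theorem char_sum_aux (N : ℕ) (hN : 0 < N) (d : ℤ) (h1 : d < N) (h2 : -(N : ℤ) < d) :
    (1 / N : ℂ) * ∑ n ∈ range N, Complex.exp (2 * π * I * d / N) ^ n
      = if d = 0 then 1 else 0 := by
  have hN0 : (N : ℂ) ≠ 0 := by exact_mod_cast hN.ne'
  split_ifs with hd
  · subst hd
    simp [hN0]
  · have hz : Complex.exp (2 * π * I * d / N) ≠ 1 := by
      intro h
      rw [Complex.exp_eq_one_iff] at h
      obtain ⟨m, hm⟩ := h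
      have hpi : (2 * π * I : ℂ) ≠ 0 := Complex.two_pi_I_ne_zero
      have h3 : (2 * π * I : ℂ) * d = (2 * π * I) * (m * N) := by
        field_simp at hm
        linear_combination (2 * π * I : ℂ) * hm
      have h4 : (d : ℂ) = m * N := mul_left_cancel₀ hpi h3
      have h5 : d = m * N := by exact_mod_cast h4
      apply hd
      apply Int.eq_zero_of_abs_lt_dvd (m := (N : ℤ)) ⟨m, by rw [h5]; ring⟩
      exact abs_lt.mpr ⟨h2, h1⟩
    have hzN : Complex.exp (2 * π * I * d / N) ^ N = 1 := by
      rw [← Complex.exp_nat_mul, Complex.exp_eq_one_iff]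
      exact ⟨d, by field_simp⟩
    rw [geom_sum_eq hz, hzN]
    simp

/-- For a single-path channel with zero delay and Doppler shift `ν₁ = qΔf`, the
Zak-receiver effective delay-Doppler channel is diagonal:
`h̃[k',l',k,l] = h₁·e^{2πi q l'/M}·δ[k−k']·δ[l−l']`. -/
theorem zak_receiver_single_path_integer_doppler (M N : ℕ) (hM : 0 < M) (hN : 0 < N)
    (T : ℝ) (hT : 0 < T) (Δf : ℝ) (hΔf : Δf = 1 / T)
    (q : ℕ) (hq : q ≤ M - 1) (h₁ : ℂ) (ν₁ : ℝ) (hν₁ : ν₁ = q * Δf) :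
    ∀ k < N, ∀ k' < N, ∀ l < M, ∀ l' < M,
      h₁ * Complex.exp (2 * π * I * ((ν₁ / Δf) * ((l' : ℝ) / M))) *
        Complex.exp (2 * π * I * (((k' : ℝ) / N - ν₁ / Δf) * (⌊(l' : ℝ) / M⌋ : ℤ))) *
        w1 N T (((k' : ℝ) - (k : ℝ)) * Δf / N - ν₁) *
        w2 M T (((l' : ℝ) - (l : ℝ)) * T / M)
      = h₁ * Complex.exp (2 * π * I * ((q * l' : ℝ) / M)) *
          (if k = k' then 1 else 0) * (if l = l' then 1 else 0) := by
  intro k hk k' hk' l hl l' hl'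
  have hTC : (T : ℂ) ≠ 0 := by exact_mod_cast hT.ne'
  have hNC : (N : ℂ) ≠ 0 := by exact_mod_cast hN.ne'
  have hMC : (M : ℂ) ≠ 0 := by exact_mod_cast hM.ne'
  have hD : (Δf : ℂ) ≠ 0 := by rw [hΔf]; push_cast; exact one_div_ne_zero hTC
  have hfl : ⌊(l' : ℝ) / M⌋ = 0 := by
    rw [Int.floor_eq_zero_iff]
    have hMR : (0 : ℝ) < M := by exact_mod_cast hM
    exact ⟨by positivity, (div_lt_one hMR).mpr (by exact_mod_cast hl')⟩
  have hw1 : w1 N T (((k' : ℝ) - (k : ℝ)) * Δf / N - ν₁) = if k = k' then 1 else 0 := by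
    have := char_sum_aux N hN ((k : ℤ) - k') (by omega) (by omega)
    have hiff : ((k : ℤ) - k' = 0) ↔ k = k' := by omega
    simp only [hiff] at this
    rw [← this, w1]
    congr 1
    refine Finset.sum_congr rfl fun n _ => ?_
    rw [← Complex.exp_nat_mul, Complex.exp_eq_exp_iff_exists_int]
    refine ⟨(n : ℤ) * q, ?_⟩
    rw [hν₁, hΔf]
    push_cast
    field_simp
    ring
  have hw2 : w2 M T (((l' : ℝ) - (l : ℝ)) * T / M) = if l = l' then 1 else 0 := by
    have := char_sum_aux M hM ((l' : ℤ) - l) (by omega) (by omega)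
    have hiff : ((l' : ℤ) - l = 0) ↔ l = l' := by omega
    simp only [hiff] at this
    rw [← this, w2]
    congr 1
    refine Finset.sum_congr rfl fun n _ => ?_
    rw [← Complex.exp_nat_mul]
    congr 1
    push_cast
    field_simp
  have hphase : (2 * π * I * ((ν₁ / Δf) * ((l' : ℝ) / M)) : ℂ)
      = 2 * π * I * ((q * l' : ℝ) / M) := by
    rw [hν₁]
    push_cast
    field_simp
  rw [hw1, hw2, hfl, hphase]
  simp
end

section
/- Fix positive integers M, N, let q be an integer with 0 ≤ q ≤ M−1 and let h₁ ∈ ℂ. Define the MN × MN complex matrix Ĥ whose entry in row k'M + l' + 1 and column kM + l + 1 (0 ≤ k, k' ≤ N−1, 0 ≤ l, l' ≤ M−1) is ĥ[k',l',k,l] := h₁·e^{2πi q l'/M}·δ[k − k']·( (1/M) Σ_{m=0}^{M−1−q} e^{2πi m (l'−l)/M} ), where δ[0] = 1 and δ[m] = 0 for m ≠ 0. Then the Gram matrix Ĥ^H Ĥ has entries (Ĥ^H Ĥ)[k₁M + l₁ + 1, k₂M + l₂ + 1] = δ[k₁ − k₂]·|h₁|²·(1/M) Σ_{m=0}^{M−q−1}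 e^{2πi m (l₁ − l₂)/M}. In particular, Ĥ^H Ĥ is block diagonal with N identical M × M blocks. -/
open Complex Real Finset Matrix

open ComplexConjugate in
lemma aux_conj_exp (x : ℝ) : conj (Complex.exp (2 * π * I * x)) = Complex.exp (-(2 * π * I * x)) := by
  rw [← Complex.exp_conj]
  congr 1
  simp [Complex.conj_ofNat]

lemma aux_orth (M : ℕ) (hM : 0 < M) (a b : ℕ) (ha : a < M) (hb : b < M) :
    ∑ l : Fin M, Complex.exp (2 * π * I * (((b : ℂ) - a) * ((l : ℕ) : ℂ) / M)) =
      if a = b then (M : ℂ) else 0 := by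
  have hM0 : (M : ℂ) ≠ 0 := by exact_mod_cast hM.ne'
  split_ifs with h
  · subst h
    simp
  · have hz := Complex.isPrimitiveRoot_exp M hM.ne'
    set z := Complex.exp (2 * π * I * (((b : ℂ) - a) / M)) with hzdef
    have h1 : ∀ l : Fin M, Complex.exp (2 * π * I * (((b : ℂ) - a) * ((l : ℕ) : ℂ) / M)) = z ^ (l : ℕ) := by
      intro l
      rw [hzdef, ← Complex.exp_nat_mul]
      congr 1
      ring
    simp_rw [h1]
    rw [Fin.sum_univ_eq_sum_range (fun i => z ^ i) M]
    have hzp : z * Complex.exp (2 * π * I / M) ^ a = Complex.exp (2 * π * I / M) ^ b := by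
      rw [hzdef, ← Complex.exp_nat_mul, ← Complex.exp_nat_mul, ← Complex.exp_add]
      congr 1
      ring
    have hne : z ≠ 1 := by
      intro h2
      rw [h2, one_mul] at hzp
      exact h (hz.pow_inj ha hb hzp)
    have hpow : z ^ M = 1 := by
      rw [hzdef, ← Complex.exp_nat_mul]
      rw [Complex.exp_eq_one_iff]
      refine ⟨(b : ℤ) - a, ?_⟩
      push_cast
      field_simp
    rw [geom_sum_eq hne, hpow]
    simp

open ComplexConjugate in
lemma aux_gram (M q : ℕ) (hM : 0 < M) (l₁ l₂ : ℝ) :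
    ∑ l : Fin M,
      conj (∑ m ∈ range (M - q), Complex.exp (2 * π * I * ((m : ℝ) * (((l : ℕ) : ℝ) - (l₁ : ℝ)) / M))) *
      (∑ m ∈ range (M - q), Complex.exp (2 * π * I * ((m : ℝ) * (((l : ℕ) : ℝ) - (l₂ : ℝ)) / M))) =
      M * ∑ m ∈ range (M - q), Complex.exp (2 * π * I * ((m : ℝ) * ((l₁ : ℝ) - (l₂ : ℝ)) / M)) := by
  have hterm : ∀ l : Fin M, ∀ a b : ℕ,
      conj (Complex.exp (2 * π * I * ((a : ℝ) * (((l : ℕ) : ℝ) - (l₁ : ℝ)) / M))) *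
        Complex.exp (2 * π * I * ((b : ℝ) * (((l : ℕ) : ℝ) - (l₂ : ℝ)) / M)) =
      Complex.exp (2 * π * I * (((a : ℂ) * l₁ - b * l₂) / M)) *
        Complex.exp (2 * π * I * (((b : ℂ) - a) * ((l : ℕ) : ℂ) / M)) := by
    intro l a b
    have := aux_conj_exp ((a : ℝ) * (((l : ℕ) : ℝ) - (l₁ : ℝ)) / M)
    push_cast at this ⊢
    rw [this, ← Complex.exp_add, ← Complex.exp_add]
    congr 1
    ring
  simp_rw [map_sum, Finset.sum_mul_sum, hterm]
  rw [Finset.sum_comm, Finset.mul_sum]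
  refine Finset.sum_congr rfl fun a ha => ?_
  rw [Finset.sum_comm]
  have ha' := Finset.mem_range.1 ha
  have : ∀ b ∈ range (M - q), ∑ l : Fin M, Complex.exp (2 * π * I * (((a : ℂ) * l₁ - b * l₂) / M)) *
        Complex.exp (2 * π * I * (((b : ℂ) - a) * ((l : ℕ) : ℂ) / M)) =
        if a = b then Complex.exp (2 * π * I * (((a : ℂ) * l₁ - b * l₂) / M)) * M else 0 := by
    intro b hb
    have hb' := Finset.mem_range.1 hb
    rw [← Finset.mul_sum, aux_orth M hM a b (by omega) (by omega)]
    simp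
  rw [Finset.sum_congr rfl this, Finset.sum_ite_eq, if_pos ha, mul_comm]
  push_cast
  congr 2
  ring

/-- The Gram matrix `Ĥᴴ Ĥ` of the two-step receiver's effective delay-Doppler channel
matrix (single path, zero delay, Doppler shift `qΔf`) is block diagonal with `N`
identical `M × M` blocks; rows/columns are indexed by the pairs `(k', l')` / `(k, l)`,
matching the row index `k'M + l' + 1` and column index `kM + l + 1`. -/
theorem two_step_gram_matrix (M N : ℕ) (hM : 0 < M) (hN : 0 < N)
    (q : ℕ) (hq : q ≤ M - 1) (h₁ : ℂ)
    (H : Matrix (Fin N × Fin M) (Fin N × Fin M) ℂ)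
    (hH : ∀ (k' : Fin N) (l' : Fin M) (k : Fin N) (l : Fin M),
      H (k', l') (k, l) = h₁ * Complex.exp (2 * π * I * ((q * (l' : ℕ) : ℝ) / M)) *
        (if k = k' then 1 else 0) *
        ((1 / M : ℂ) * ∑ m ∈ range (M - q),
          Complex.exp (2 * π * I * ((m : ℝ) * (((l' : ℕ) : ℝ) - ((l : ℕ) : ℝ)) / M)))) :
    ∀ (k₁ : Fin N) (l₁ : Fin M) (k₂ : Fin N) (l₂ : Fin M),
      (Hᴴ * H) (k₁, l₁) (k₂, l₂) =
        (if k₁ = k₂ then 1 else 0) * (‖h₁‖ ^ 2 : ℝ) *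
          ((1 / M : ℂ) * ∑ m ∈ range (M - q),
            Complex.exp (2 * π * I * ((m : ℝ) * (((l₁ : ℕ) : ℝ) - ((l₂ : ℕ) : ℝ)) / M))) := by
  intro k₁ l₁ k₂ l₂
  have hM0 : (M : ℂ) ≠ 0 := by exact_mod_cast hM.ne'
  have hg := aux_gram M q hM (l₁ : ℕ) (l₂ : ℕ)
  rw [Matrix.mul_apply, Fintype.sum_prod_type]
  simp_rw [Matrix.conjTranspose_apply, hH]
  set F : ℕ → ℕ → ℂ := fun x y => ∑ m ∈ range (M - q),
          Complex.exp (2 * π * I * ((m : ℝ) * ((x : ℝ) - (y : ℝ)) / M)) with hF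
  have hE : ∀ l : Fin M, star (Complex.exp (2 * π * I * ((q * (l : ℕ) : ℝ) / M))) *
      Complex.exp (2 * π * I * ((q * (l : ℕ) : ℝ) / M)) = 1 := by
    intro l
    have := aux_conj_exp ((q * (l : ℕ) : ℝ) / M)
    push_cast at this ⊢
    rw [Complex.star_def, this, ← Complex.exp_add]
    simp
  have hh : star h₁ * h₁ = ((‖h₁‖ ^ 2 : ℝ) : ℂ) := by
    rw [Complex.star_def, Complex.conj_mul']
    push_cast
    rfl
  have key : ∀ k : Fin N, ∀ l : Fin M,
      star (h₁ * Complex.exp (2 * π * I * ((q * (l : ℕ) : ℝ) / M)) * (if k₁ = k then 1 else 0) *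
        ((1 / M : ℂ) * F l l₁)) *
      (h₁ * Complex.exp (2 * π * I * ((q * (l : ℕ) : ℝ) / M)) * (if k₂ = k then 1 else 0) *
        ((1 / M : ℂ) * F l l₂)) =
      (if k₁ = k then (if k₁ = k₂ then 1 else 0) * ((‖h₁‖ ^ 2 : ℝ) : ℂ) * (1 / M : ℂ) ^ 2 else 0) *
        (star (F l l₁) * F l l₂) := by
    intro k l
    rw [← hh]
    by_cases h1 : k₁ = k
    · subst h1
      by_cases h2 : k₁ = k₂
      · subst h2
        simp only [if_true, star_mul', star_one, star_div₀, star_natCast]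
        linear_combination (star h₁ * h₁ * (1 / M : ℂ) ^ 2 * (star (F l l₁) * F l l₂)) * hE l
      · simp [h2, Ne.symm h2]
    · simp [h1]
  refine (Finset.sum_congr rfl fun k _ => Finset.sum_congr rfl fun l _ => key k l).trans ?_
  simp_rw [← Finset.mul_sum]
  have hg' : ∑ l : Fin M, star (F l l₁) * F l l₂ = M * F l₁ l₂ := hg
  rw [hg', ← Finset.sum_mul, Finset.sum_ite_eq, if_pos (Finset.mem_univ _)]
  change _ = _ * _ * ((1 / M : ℂ) * F l₁ l₂)
  field_simp
end

section
/- Fix a positive integer M, an integer q with 0 ≤ q ≤ M−1, h₁ ∈ ℂ, and a real ρ ≥ 0. Define the M × M complex matrix A with entries A[l₁+1, l₂+1] = |h₁|²·(1/M) Σ_{m=0}^{M−q−1} e^{2πi m (l₁ − l₂)/M} for 0 ≤ l₁, l₂ ≤ M−1. Then det(I_M + ρA) = (1 + ρ|h₁|²)^{M−q}, and consequently the spectral efficiency of the two-step receiver equals (1/M)·log₂ det(I_M + ρA) = (1 − q/M)·log₂(1 + ρ|h₁|²). -/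
open Complex Real Finset Matrix

/-- For the diagonal block `A` of the two-step receiver's Gram matrix,
`det(I + ρA) = (1 + ρ|h₁|²)^{M−q}`, so the spectral efficiency of the two-step
receiver is `(1/M)·log₂ det(I + ρA) = (1 − q/M)·log₂(1 + ρ|h₁|²)`. -/
theorem two_step_receiver_spectral_efficiency (M : ℕ) (hM : 0 < M)
    (q : ℕ) (hq : q ≤ M - 1) (h₁ : ℂ) (ρ : ℝ) (hρ : 0 ≤ ρ)
    (A : Matrix (Fin M) (Fin M) ℂ)
    (hA : ∀ l₁ l₂ : Fin M, A l₁ l₂ = (‖h₁‖ ^ 2 : ℝ) *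
      ((1 / M : ℂ) * ∑ m ∈ range (M - q),
        Complex.exp (2 * π * I * ((m : ℝ) * (((l₁ : ℕ) : ℝ) - ((l₂ : ℕ) : ℝ)) / M)))) :
    (1 + (ρ : ℂ) • A).det = (((1 + ρ * ‖h₁‖ ^ 2 : ℝ) : ℂ)) ^ (M - q) ∧
    (1 / (M : ℝ)) * Real.logb 2 ((1 + (ρ : ℂ) • A).det.re) =
      (1 - (q : ℝ) / M) * Real.logb 2 (1 + ρ * ‖h₁‖ ^ 2) := by
  have hM0 : (M : ℂ) ≠ 0 := by exact_mod_cast hM.ne'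
  have hz : IsPrimitiveRoot (Complex.exp (2 * π * I / M)) M :=
    Complex.isPrimitiveRoot_exp M hM.ne'
  set z : ℂ := Complex.exp (2 * π * I / M) with hzdef
  have hz0 : z ≠ 0 := Complex.exp_ne_zero _
  set c : ℂ := ((ρ * ‖h₁‖ ^ 2 : ℝ) : ℂ) with hc
  let U : Matrix (Fin M) (Fin (M - q)) ℂ := fun l m => c * (1 / M) * (z ^ (m : ℕ)) ^ (l : ℕ)
  let V : Matrix (Fin (M - q)) (Fin M) ℂ := fun m l => ((z ^ (m : ℕ))⁻¹) ^ (l : ℕ)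
  have hUV : (ρ : ℂ) • A = U * V := by
    ext l₁ l₂
    rw [Matrix.smul_apply, hA, Matrix.mul_apply, smul_eq_mul]
    have h1 : ∀ m : ℕ, Complex.exp (2 * π * I * ((m : ℝ) * (((l₁ : ℕ) : ℝ) - ((l₂ : ℕ) : ℝ)) / M))
        = (z ^ m) ^ (l₁ : ℕ) * ((z ^ m)⁻¹) ^ (l₂ : ℕ) := by
      intro m
      rw [hzdef, ← Complex.exp_nat_mul, ← Complex.exp_neg, ← Complex.exp_nat_mul,
        ← Complex.exp_nat_mul, ← Complex.exp_add]
      congr 1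
      push_cast
      ring
    simp only [h1]
    rw [← Fin.sum_univ_eq_sum_range
      (fun m => (z ^ m) ^ (l₁ : ℕ) * ((z ^ m)⁻¹) ^ (l₂ : ℕ)) (M - q)]
    simp only [U, V, Finset.mul_sum]
    refine Finset.sum_congr rfl fun m _ => ?_
    rw [hc]
    push_cast
    ring
  have hVU : V * U = c • (1 : Matrix (Fin (M - q)) (Fin (M - q)) ℂ) := by
    ext m n
    rw [Matrix.mul_apply, Matrix.smul_apply, smul_eq_mul]
    have h2 : ∀ l : Fin M, V m l * U l n
        = c * (1 / M) * (((z ^ (m : ℕ))⁻¹ * z ^ (n : ℕ)) ^ (l : ℕ)) := by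
      intro l
      simp only [U, V, mul_pow]
      ring
    simp only [h2]
    rw [← Finset.mul_sum, Fin.sum_univ_eq_sum_range
      (fun l => ((z ^ (m : ℕ))⁻¹ * z ^ (n : ℕ)) ^ l) M]
    by_cases hmn : m = n
    · subst hmn
      rw [inv_mul_cancel₀ (pow_ne_zero _ hz0)]
      simp
      field_simp
    · rw [Matrix.one_apply_ne hmn]
      set w := (z ^ (m : ℕ))⁻¹ * z ^ (n : ℕ) with hw
      have hwM : w ^ M = 1 := by
        rw [hw, mul_pow, inv_pow, ← pow_mul, ← pow_mul, mul_comm, mul_comm (n : ℕ), pow_mul,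
          mul_comm (m : ℕ), pow_mul, hz.pow_eq_one]
        simp
      have hw1 : w ≠ 1 := by
        intro h
        apply hmn
        have h3 : z ^ (m : ℕ) = z ^ (n : ℕ) := by
          rw [hw, inv_mul_eq_one₀ (pow_ne_zero _ hz0)] at h
          exact h
        exact Fin.ext (hz.pow_inj (by have := m.2; omega) (by have := n.2; omega) h3)
      rw [geom_sum_eq hw1, hwM]
      simp
  have hdet : (1 + (ρ : ℂ) • A).det = (((1 + ρ * ‖h₁‖ ^ 2 : ℝ) : ℂ)) ^ (M - q) := by
    rw [hUV, Matrix.det_one_add_mul_comm, hVU]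
    have : (1 : Matrix (Fin (M - q)) (Fin (M - q)) ℂ) + c • 1 = (1 + c) • 1 := by
      rw [add_smul, one_smul]
    rw [this, Matrix.det_smul, Matrix.det_one, Fintype.card_fin, mul_one, hc]
    push_cast
    rfl
  refine ⟨hdet, ?_⟩
  rw [hdet, ← Complex.ofReal_pow, Complex.ofReal_re, Real.logb_pow,
    Nat.cast_sub (by omega)]
  have hMr : (M : ℝ) ≠ 0 := by exact_mod_cast hM.ne'
  field_simp
end

section
/- Fix positive integers M, N, an integer q with 0 ≤ q ≤ M−1, h₁ ∈ ℂ, and a real ρ ≥ 0. Define the MN × MN complex matrix H whose entry in row k'M + l' + 1 and column kM + l + 1 (0 ≤ k, k' ≤ N−1, 0 ≤ l, l' ≤ M−1) is h₁·e^{2πi q l'/M}·δ[k − k']·δ[l − l'], where δ[0] = 1 and δ[m] = 0 for m ≠ 0. Then H^H H = |h₁|²·I_{MN}, and consequently the spectral efficiency of the Zak receiver equals (1/(MN))·log₂ det(I_{MN} + ρ·H^H H) = log₂(1 + ρ|h₁|²), independently of the Doppler index q — the same as the capacity of an ideal single-path channel without any Doppler shift. -/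
open Complex Real Finset Matrix

/-- For a single-path channel with zero delay and Doppler shift `qΔf`, the Zak-receiver
effective delay-Doppler channel matrix `H` satisfies `Hᴴ H = |h₁|²·I`, so the spectral
efficiency of the Zak receiver is
`(1/(MN))·log₂ det(I + ρ Hᴴ H) = log₂(1 + ρ|h₁|²)`, independently of `q` — the same as
the capacity of an ideal single-path channel without any Doppler shift. Rows/columns are
indexed by the pairs `(k', l')` / `(k, l)`, matching the row index `k'M + l' + 1` and
column index `kM + l + 1`. -/
theorem zak_receiver_spectral_efficiency (M N : ℕ) (hM : 0 < M) (hN : 0 < N)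
    (q : ℕ) (hq : q ≤ M - 1) (h₁ : ℂ) (ρ : ℝ) (hρ : 0 ≤ ρ)
    (H : Matrix (Fin N × Fin M) (Fin N × Fin M) ℂ)
    (hH : ∀ (k' : Fin N) (l' : Fin M) (k : Fin N) (l : Fin M),
      H (k', l') (k, l) = h₁ * Complex.exp (2 * π * I * ((q * (l' : ℕ) : ℝ) / M)) *
        (if k = k' then 1 else 0) * (if l = l' then 1 else 0)) :
    Hᴴ * H = ((‖h₁‖ ^ 2 : ℝ) : ℂ) • (1 : Matrix (Fin N × Fin M) (Fin N × Fin M) ℂ) ∧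
    (1 / ((M : ℝ) * N)) * Real.logb 2 ((1 + (ρ : ℂ) • (Hᴴ * H)).det.re) =
      Real.logb 2 (1 + ρ * ‖h₁‖ ^ 2) := by
  have hd : H = Matrix.diagonal (fun p : Fin N × Fin M =>
      h₁ * Complex.exp (((2 * π * ((q * (p.2 : ℕ) : ℝ) / M) : ℝ) : ℂ) * I)) := by
    ext ⟨k', l'⟩ ⟨k, l⟩
    rw [hH, Matrix.diagonal_apply]
    by_cases h1 : k = k'
    · by_cases h2 : l = l'
      · subst h1 h2
        simp only [if_true, mul_one]
        congr 2
        push_cast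
        ring
      · have : ¬ ((k', l') = (k, l)) := fun h => h2 (Prod.mk.inj h).2.symm
        simp [h2, this]
    · have : ¬ ((k', l') = (k, l)) := fun h => h1 (Prod.mk.inj h).1.symm
      simp [h1, this]
  have hHH : Hᴴ * H = ((‖h₁‖ ^ 2 : ℝ) : ℂ) •
      (1 : Matrix (Fin N × Fin M) (Fin N × Fin M) ℂ) := by
    rw [hd, Matrix.diagonal_conjTranspose, Matrix.diagonal_mul_diagonal,
      Matrix.smul_one_eq_diagonal]
    congr 1
    funext p
    rw [Pi.star_apply, Complex.star_def, mul_comm, Complex.mul_conj, Complex.normSq_eq_norm_sq,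
      norm_mul, Complex.norm_exp_ofReal_mul_I, mul_one]
  refine ⟨hHH, ?_⟩
  have hdet : (1 + (ρ : ℂ) • (Hᴴ * H)).det = (((1 + ρ * ‖h₁‖ ^ 2) ^ (N * M) : ℝ) : ℂ) := by
    have : (1 + (ρ : ℂ) • (Hᴴ * H)) = ((1 + ρ * ‖h₁‖ ^ 2 : ℝ) : ℂ) •
        (1 : Matrix (Fin N × Fin M) (Fin N × Fin M) ℂ) := by
      rw [hHH, smul_smul]
      push_cast
      rw [add_smul, one_smul]
    rw [this, Matrix.det_smul, Matrix.det_one, mul_one, Fintype.card_prod, Fintype.card_fin,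
      Fintype.card_fin, Complex.ofReal_pow]
  rw [hdet, Complex.ofReal_re, Real.logb_pow]
  have hM' : (M : ℝ) ≠ 0 := by positivity
  have hN' : (N : ℝ) ≠ 0 := by positivity
  push_cast
  field_simp
end
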